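/- arXiv:1704.05451 — 2 statements merged into one kernel-verified Lean document; each statement's English description precedes it below -/
import Mathlib

section
/- Let M ≥ 4 be an integer. Assume the polynomial Ĥe_{M-2} has M−2 distinct real roots λ̂_1 > λ̂_2 > ... > λ̂_{M-2} (listed in descending order). Define the (M−2)×(M−2) matrix R̂ by R̂_{ij} = Ĥe_{i-1}(λ̂_j)/(i+1)! for i, j = 1, ..., M−2, let R̂_+ be the submatrix of R̂ consisting of its first ⌊M/2⌋−1 columns, and let R̂_{+,even} be the (⌊M/2⌋−1)×(⌊M/2⌋−1) square submatrix of R̂_+ consisting of its rows with even row index i. Then R̂_{+,even} is invertible. -/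
/-!
An odd monic polynomial of degree `2t + 1` is `x * q_t(x²)` with `q_t` monic of degree `t`. Pulling
`x_j` out of the `j`-th column, the determinant of a family of such polynomials at `x_0, x_1, …`
becomes `∏ x_j` times that of `q_t(x_j²)`, which is the Vandermonde determinant of the `x_j²`.
It is nonzero at distinct positive points. That the first half of the zeros of `Ĥe_n` is positive is
pure symmetry: negation reverses the descending enumeration of a symmetric set.
-/

open Polynomial Matrix

/-- Modified Hermite-type polynomials: Ĥe₀ = 1, Ĥe₁ = x,
    Ĥe_{k+1} = x·Ĥe_k − (k+2)·Ĥe_{k−1} for k ≥ 1. -/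
noncomputable def Hhat : ℕ → Polynomial ℝ
  | 0 => 1
  | 1 => Polynomial.X
  | (n + 2) => Polynomial.X * Hhat (n + 1) - Polynomial.C ((n : ℝ) + 3) * Hhat n

section OddPolynomials

variable {R : Type*} [CommRing R]

lemma coeff_eq_zero_of_comp_neg_X_eq_neg [IsAddTorsionFree R] {p : R[X]}
    (hp : p.comp (-X) = -p) {k : ℕ} (hk : Even k) : p.coeff k = 0 := by
  have hcoeff : (p.comp (C (-1) * X)).coeff k = -p.coeff k := by simp [hp]
  rwa [comp_C_mul_X_coeff, hk.neg_one_pow, mul_one, self_eq_neg] at hcoeff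

lemma X_mul_expand_contract_divX {p : R[X]} (hp : ∀ k, Even k → p.coeff k = 0) :
    X * expand R 2 (contract 2 p.divX) = p := by
  ext k
  cases k with
  | zero => simp [hp 0 Even.zero]
  | succ k =>
    rw [coeff_X_mul, coeff_expand two_pos, coeff_contract two_ne_zero, coeff_divX]
    split_ifs with hk
    · rw [Nat.div_mul_cancel hk]
    · exact (hp _ (Nat.even_add_one.2 (even_iff_two_dvd.not.2 hk))).symm

lemma exists_eval_eq_mul_eval_sq [IsAddTorsionFree R] {p : R[X]} {t : ℕ}
    (hodd : p.comp (-X) = -p) (hp : IsMonicOfDegree p (2 * t + 1)) :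
    ∃ q : R[X], IsMonicOfDegree q t ∧ ∀ x, p.eval x = x * q.eval (x ^ 2) := by
  have : Nontrivial R := not_subsingleton_iff_nontrivial.1 fun _ => by
    simp [isMonicOfDegree_iff_of_subsingleton] at hp
  have hfactor : X * expand R 2 (contract 2 p.divX) = p :=
    X_mul_expand_contract_divX fun _ => coeff_eq_zero_of_comp_neg_X_eq_neg hodd
  refine ⟨contract 2 p.divX, ?_, fun x => ?_⟩
  · have hexpand : IsMonicOfDegree (expand R 2 (contract 2 p.divX)) (2 * t) :=
      (isMonicOfDegree_X R).of_mul_left (by rwa [hfactor, add_comm])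
    refine ⟨?_, (monic_expand_iff two_pos).1 hexpand.monic⟩
    have hdeg := hexpand.natDegree_eq
    rw [natDegree_expand] at hdeg
    omega
  · calc p.eval x = (X * expand R 2 (contract 2 p.divX)).eval x := by rw [hfactor]
      _ = x * (contract 2 p.divX).eval (x ^ 2) := by rw [eval_mul, eval_X, expand_eval]

theorem det_eval_odd_eq_prod_mul_det_vandermonde [IsAddTorsionFree R] {n : ℕ} (x : Fin n → R)
    {p : Fin n → R[X]} (hodd : ∀ t, (p t).comp (-X) = -p t)
    (hp : ∀ t, IsMonicOfDegree (p t) (2 * (t : ℕ) + 1)) :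
    (Matrix.of fun t j => (p t).eval (x j)).det =
      (∏ j, x j) * (vandermonde fun j => x j ^ 2).det := by
  choose q hq heval using fun t => exists_eval_eq_mul_eval_sq (hodd t) (hp t)
  let Q : Matrix (Fin n) (Fin n) R := Matrix.of fun j t => (q t).eval (x j ^ 2)
  calc (Matrix.of fun t j => (p t).eval (x j)).det
      = (Matrix.of fun t j => x j * Qᵀ t j).det := by simp_rw [heval]; rfl
    _ = (∏ j, x j) * Q.det := by rw [det_mul_row, det_transpose]
    _ = (∏ j, x j) * (vandermonde fun j => x j ^ 2).det := by
        rw [det_eval_matrixOfPolynomials_eq_det_vandermonde _ q (fun t => (hq t).natDegree_eq)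
          fun t => (hq t).monic]

theorem det_eval_odd_ne_zero_iff [IsDomain R] [IsAddTorsionFree R] {n : ℕ} {x : Fin n → R}
    {p : Fin n → R[X]} (hodd : ∀ t, (p t).comp (-X) = -p t)
    (hp : ∀ t, IsMonicOfDegree (p t) (2 * (t : ℕ) + 1)) :
    (Matrix.of fun t j => (p t).eval (x j)).det ≠ 0 ↔
      (∀ j, x j ≠ 0) ∧ Function.Injective fun j => x j ^ 2 := by
  rw [det_eval_odd_eq_prod_mul_det_vandermonde x hodd hp, mul_ne_zero_iff,
    det_vandermonde_ne_zero_iff, Finset.prod_ne_zero_iff]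
  simp only [Finset.mem_univ, true_imp_iff]

end OddPolynomials

lemma strictAnti_apply_rev_eq_neg {G : Type*} [AddCommGroup G] [PartialOrder G]
    [IsOrderedAddMonoid G] {n : ℕ} {x : Fin n → G} (hx : StrictAnti x)
    (hsymm : ∀ r ∈ Set.range x, -r ∈ Set.range x) (i : Fin n) : x i.rev = -x i := by
  have hanti : StrictAnti fun i : Fin n => -x i.rev :=
    fun _ _ hij => neg_lt_neg (hx (Fin.rev_lt_rev.2 hij))
  have hrange : Set.range (fun i : Fin n => -x i.rev) = Set.range x := by
    ext r
    constructor
    · rintro ⟨i, rfl⟩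
      exact hsymm _ ⟨_, rfl⟩
    · intro hr
      obtain ⟨i, hi⟩ := hsymm r hr
      exact ⟨i.rev, by simp [hi]⟩
  have heq := congrFun ((hanti.range_inj hx).1 hrange) i
  exact neg_eq_iff_eq_neg.1 heq

lemma strictAnti_pos_of_lt_rev {G : Type*} [AddCommGroup G] [LinearOrder G]
    [IsOrderedAddMonoid G] {n : ℕ} {x : Fin n → G} (hx : StrictAnti x)
    (hsymm : ∀ r ∈ Set.range x, -r ∈ Set.range x) {i : Fin n} (hi : i < i.rev) : 0 < x i := by
  have hlt : x i.rev < x i := hx hi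
  rwa [strictAnti_apply_rev_eq_neg hx hsymm, neg_lt_self_iff] at hlt

lemma range_eq_setOf_isRoot {R ι : Type*} [CommRing R] [IsDomain R] [Fintype ι] {p : R[X]}
    (hp : p ≠ 0) (hdeg : p.natDegree ≤ Fintype.card ι) {x : ι → R} (hx : Function.Injective x)
    (hroot : ∀ i, p.IsRoot (x i)) : Set.range x = {r | p.IsRoot r} := by
  classical
  have hroots : p.roots = (Finset.univ.image x).val :=
    roots_eq_of_natDegree_le_card_of_ne_zero (by simpa using hroot)
      (by rwa [Finset.card_image_of_injective _ hx, Finset.card_univ]) hp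
  ext r
  rw [Set.mem_ofPred_eq, ← mem_roots hp, hroots]
  simp

/-- Monic polynomials with a three-term recurrence lacking the diagonal term: the shape taken by
the monic orthogonal polynomials of a symmetric weight. Nothing is assumed on the coefficients
`c n`; orthogonality would require them to be positive. -/
structure SymmetricThreeTerm {R : Type*} [CommRing R] (p : ℕ → R[X]) (c : ℕ → R) : Prop where
  zero : p 0 = 1
  one : p 1 = X
  add_two : ∀ n, p (n + 2) = X * p (n + 1) - C (c n) * p n

namespace SymmetricThreeTerm

variable {R : Type*} [CommRing R] {p : ℕ → R[X]} {c : ℕ → R}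

lemma isMonicOfDegree [Nontrivial R] (h : SymmetricThreeTerm p c) (n : ℕ) :
    IsMonicOfDegree (p n) n := by
  induction n using Nat.twoStepInduction with
  | zero => rw [h.zero, isMonicOfDegree_zero_iff]
  | one => exact h.one ▸ isMonicOfDegree_X R
  | more n ih₀ ih₁ =>
    have hX : IsMonicOfDegree (X * p (n + 1)) (n + 2) := by
      rw [show n + 2 = 1 + (n + 1) by omega]
      exact (isMonicOfDegree_X R).mul ih₁
    have hC : (C (c n) * p n).natDegree < n + 2 :=
      calc (C (c n) * p n).natDegree ≤ (p n).natDegree := natDegree_C_mul_le _ _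
        _ < n + 2 := by rw [ih₀.natDegree_eq]; omega
    exact h.add_two n ▸ hX.sub hC

lemma comp_neg_X (h : SymmetricThreeTerm p c) (n : ℕ) : (p n).comp (-X) = (-1) ^ n * p n := by
  induction n using Nat.twoStepInduction with
  | zero => simp [h.zero]
  | one => simp [h.one]
  | more n ih₀ ih₁ =>
    rw [h.add_two, sub_comp, mul_comp, mul_comp, X_comp, C_comp, ih₀, ih₁]
    ring

lemma comp_neg_X_odd (h : SymmetricThreeTerm p c) {n : ℕ} (hn : Odd n) :
    (p n).comp (-X) = -p n := by
  rw [h.comp_neg_X, hn.neg_one_pow, neg_one_mul]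

lemma isRoot_neg (h : SymmetricThreeTerm p c) {n : ℕ} {r : R} (hr : (p n).IsRoot r) :
    (p n).IsRoot (-r) := by
  have heval := congrArg (eval r) (h.comp_neg_X n)
  rwa [eval_comp, eval_neg, eval_X, eval_mul, hr.eq_zero, mul_zero] at heval

lemma pos_of_isRoot_of_lt_rev [LinearOrder R] [IsStrictOrderedRing R]
    (h : SymmetricThreeTerm p c) {n : ℕ} {x : Fin n → R} (hx : StrictAnti x)
    (hroot : ∀ i, (p n).IsRoot (x i)) {i : Fin n} (hi : i < i.rev) : 0 < x i := by
  have hrange : Set.range x = {r | (p n).IsRoot r} :=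
    range_eq_setOf_isRoot (h.isMonicOfDegree n).ne_zero
      (by rw [(h.isMonicOfDegree n).natDegree_eq, Fintype.card_fin]) hx.injective hroot
  exact strictAnti_pos_of_lt_rev hx (hrange ▸ fun _ => h.isRoot_neg) hi

end SymmetricThreeTerm

lemma symmetricThreeTerm_Hhat : SymmetricThreeTerm Hhat fun n => (n : ℝ) + 3 where
  zero := rfl
  one := rfl
  add_two _ := rfl

/-- Invertibility of R̂₊,even: given the M−2 distinct real roots
    λ̂₁ > ⋯ > λ̂_{M−2} of Ĥe_{M−2}, the square matrix formed by the even rows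
    of the first ⌊M/2⌋−1 columns of R̂, where R̂ᵢⱼ = Ĥe_{i−1}(λ̂ⱼ)/(i+1)!
    (1-based indices; the even rows i = 2t+2 correspond to Ĥe_{2t+1}/(2t+3)!),
    has nonzero determinant. -/
theorem Rhat_plus_even_invertible (M : ℕ) (hM : 4 ≤ M)
    (lam : Fin (M - 2) → ℝ)
    (hroot : ∀ j, (Hhat (M - 2)).eval (lam j) = 0)
    (hdesc : ∀ i j : Fin (M - 2), i < j → lam j < lam i) :
    (Matrix.of fun t j : Fin (M / 2 - 1) =>
        (Hhat (2 * (t : ℕ) + 1)).eval (lam (Fin.castLE (by omega) j)) /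
          (Nat.factorial (2 * (t : ℕ) + 3) : ℝ)).det ≠ 0 := by
  have hanti : StrictAnti lam := fun i j => hdesc i j
  have hle : M / 2 - 1 ≤ M - 2 := by omega
  have hpos (j : Fin (M / 2 - 1)) : 0 < lam (Fin.castLE hle j) :=
    symmetricThreeTerm_Hhat.pos_of_isRoot_of_lt_rev hanti hroot <| by
      rw [Fin.lt_def, Fin.val_rev, Fin.val_castLE]
      omega
  simp_rw [div_eq_inv_mul]
  refine (det_mul_column (fun t : Fin (M / 2 - 1) => ((2 * (t : ℕ) + 3).factorial : ℝ)⁻¹)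
    (Matrix.of fun t j => (Hhat (2 * (t : ℕ) + 1)).eval (lam (Fin.castLE _ j)))).trans_ne ?_
  refine mul_ne_zero (Finset.prod_ne_zero_iff.2 fun t _ => by positivity) ?_
  refine (det_eval_odd_ne_zero_iff
    (fun t => symmetricThreeTerm_Hhat.comp_neg_X_odd (odd_two_mul_add_one _))
    (fun t => symmetricThreeTerm_Hhat.isMonicOfDegree _)).2 ⟨fun j => (hpos j).ne', ?_⟩
  intro i j hij
  have hlam := (sq_eq_sq₀ (hpos i).le (hpos j).le).1 hij
  exact Fin.castLE_injective hle (hanti.injective hlam)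
end

section
/- Let M ≥ 3 be an integer and let χ ∈ (0, 1] be an algebraic real number. Assume the polynomial Ĥe_{M-2} has M−2 distinct real roots λ̂_1 > ... > λ̂_{M-2} listed in descending order. Define the (M−2)×(M−2) matrix R̂ by R̂_{ij} = Ĥe_{i-1}(λ̂_j)/(i+1)!, and let R̂_+ be its first ⌊M/2⌋−1 columns. Let χ̂(m) = 1 if m is even and χ̂(m) = (2−χ)/χ if m is odd, and set S(k,m) = χ̂(m)·S*(k,m)/√(2π). Define the column vector h ∈ ℝ^{⌊M/2⌋} with entries h_i = (2i−2)!!/√(2π) for i = 1, ..., ⌊M/2⌋ (so h_i = (β₂−1)!!/√(2π) with β₂ = 2i−1), the ⌊M/2⌋×(M−2) matrix S with entries S_{i,j} = S(2i−1, j+1) for i = 1, ..., ⌊M/2⌋ and j = 1, ..., M−2, and the square ⌊M/2⌋×⌊M/2⌋ matrix A = ( h , (S − 2·h·e₁ᵀ)·R̂_+ ), where e₁ = (1,0,...,0)ᵀ ∈ ℝ^{M−2}. Then det A ≠ 0. -/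
open Polynomial Matrix MeasureTheory Real

/-- Probabilists' Hermite polynomials: He₀ = 1, He₁ = x,
    He_{n+1} = x·He_n − n·He_{n−1}. -/
noncomputable def He : ℕ → Polynomial ℝ
  | 0 => 1
  | 1 => Polynomial.X
  | (n + 2) => Polynomial.X * He (n + 1) - Polynomial.C ((n : ℝ) + 1) * He n

/-- Half-range Hermite integral S*(k,m) = ∫₀^∞ ξ^k He_m(ξ) e^{−ξ²/2} dξ. -/
noncomputable def Sstar (k m : ℕ) : ℝ :=
  ∫ x in Set.Ioi (0 : ℝ), x ^ k * (He m).eval x * Real.exp (-x ^ 2 / 2)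

/-- The accommodation factor χ̂(m): 1 for even m, (2−χ)/χ for odd m. -/
noncomputable def chiHat (χ : ℝ) (m : ℕ) : ℝ :=
  if Even m then 1 else (2 - χ) / χ

/-- S(k,m) = χ̂(m)·S*(k,m)/√(2π). -/
noncomputable def Sχ (χ : ℝ) (k m : ℕ) : ℝ :=
  chiHat χ m * Sstar k m / Real.sqrt (2 * Real.pi)

/-! Let `L` be integration against `exp (-x² / 2)` on `(0, ∞)`. Up to the factor `√(2π)`, the
columns of the matrix consist of the odd moments `L(X ^ (2i + 1) * Q)`, `Q` being `1` or one of the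
polynomials `eₖ + c oₖ - 1` with `c = (2 - χ) / χ ≥ 0`. Here `eₖ` and `oₖ` are the even and odd
parts of a truncated Hermite expansion of a formal eigenfunction of multiplication by `X` with
eigenvalue `λₖ > 0`: apart from multiples of the first omitted Hermite polynomials, one of which
vanishes at the roots of `Ĥe_n`, `X oₖ = λₖ eₖ` and `X eₖ = X + λₖ oₖ`. A kernel vector thus yields
`F = a + ∑ vₖ (eₖ + c oₖ)` with vanishing odd moments, and it has to be shown that `v = 0`.

If `n` is even, test `F` against `X * g` with `g = a + ∑ vₖ eₖ`; this is an admissible odd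
polynomial, and `0 = L(X g F) = L(X g²) + c ∑ vₖ² λₖ L(oₖ²)` with nonnegative summands.

If `n` is odd, let `u = ∑ (vₖ / λₖ) oₖ`, so that `F = a + X u + c ∑ vₖ oₖ`. In an orthonormal basis
of odd Hermite polynomials with alternating signs, the moment conditions read `(G₁ + c √G₂) u = a p`
and `a + r · u = 0`, where `p, r ≥ 0` and `G₁`, `G₂` are the Gram matrices of the weights `X`, `X²`.
Both are positive definite with nonpositive off-diagonal entries, a class that is stable under
square roots and nonnegative combinations and whose members have nonnegative inverses. Hence
`a (1 + r · A⁻¹ p) = 0` with `A = G₁ + c √G₂`, which forces `a = 0` and `u = 0`. -/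

section HalfGaussian

lemma integrable_eval_mul_exp (p : ℝ[X]) :
    Integrable fun x : ℝ => p.eval x * exp (-x ^ 2 / 2) := by
  induction p using Polynomial.induction_on' with
  | add p q hp hq => exact (hp.add hq).congr (.of_forall fun x => by simp [add_mul])
  | monomial n a =>
    have h := integrable_rpow_mul_exp_neg_mul_sq (b := 1 / 2) (by norm_num) (s := n)
      (by have : (0 : ℝ) ≤ n := n.cast_nonneg; linarith)
    refine (h.const_mul a).congr (.of_forall fun x => ?_)
    simp only [eval_monomial, rpow_natCast]
    rw [show -(1 / 2 : ℝ) * x ^ 2 = -x ^ 2 / 2 by ring, mul_assoc]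

/-- The moment functional of the Gaussian weight on the half line: integration of a polynomial
against `exp (-x² / 2)` over `(0, ∞)`. -/
noncomputable def halfGauss : ℝ[X] →ₗ[ℝ] ℝ where
  toFun p := ∫ x in Set.Ioi (0 : ℝ), p.eval x * exp (-x ^ 2 / 2)
  map_add' p q := by
    rw [← integral_add (integrable_eval_mul_exp p).integrableOn
      (integrable_eval_mul_exp q).integrableOn]
    simp [add_mul]
  map_smul' c p := by
    rw [RingHom.id_apply, smul_eq_mul, ← integral_const_mul]
    simp [mul_assoc]

lemma halfGauss_apply (p : ℝ[X]) :
    halfGauss p = ∫ x in Set.Ioi (0 : ℝ), p.eval x * exp (-x ^ 2 / 2) := rfl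

lemma halfGauss_C_mul (c : ℝ) (p : ℝ[X]) : halfGauss (C c * p) = c * halfGauss p := by
  rw [← smul_eq_C_mul, map_smul, smul_eq_mul]

lemma halfGauss_pos {p : ℝ[X]} (hp : p ≠ 0) (hnonneg : ∀ x, 0 < x → 0 ≤ p.eval x) :
    0 < halfGauss p := by
  have hae : 0 ≤ᵐ[volume.restrict (Set.Ioi 0)] fun x => p.eval x * exp (-x ^ 2 / 2) :=
    ae_restrict_of_forall_mem measurableSet_Ioi fun x hx =>
      mul_nonneg (hnonneg x hx) (exp_pos _).le
  rw [halfGauss_apply,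
    setIntegral_pos_iff_support_of_nonneg_ae hae (integrable_eval_mul_exp p).integrableOn]
  have hroots : volume (p.roots.toFinset : Set ℝ) = 0 := p.roots.toFinset.measure_zero volume
  calc 0 < volume (Set.Ioi (0 : ℝ) \ p.roots.toFinset) := by
        rw [measure_sdiff_null hroots]; simp
    _ ≤ _ := by
        refine measure_mono fun x ⟨hx, hroot⟩ => ⟨?_, hx⟩
        simpa [hp] using hroot

lemma halfGauss_one_pos : 0 < halfGauss 1 := halfGauss_pos one_ne_zero (by simp)

lemma halfGauss_X_mul (p : ℝ[X]) :
    halfGauss (X * p) = halfGauss (derivative p) + p.eval 0 := by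
  have hderiv (x : ℝ) : HasDerivAt (fun x : ℝ => p.eval x * exp (-x ^ 2 / 2))
      ((derivative p - X * p).eval x * exp (-x ^ 2 / 2)) x := by
    have hexp : HasDerivAt (fun x : ℝ => -x ^ 2 / 2) (-x) x :=
      ((hasDerivAt_pow 2 x).neg.div_const 2).congr_deriv (by simp; ring)
    refine ((p.hasDerivAt x).mul hexp.exp).congr_deriv ?_
    simp only [eval_sub, eval_mul, eval_X]
    ring
  have hlim := tendsto_zero_of_hasDerivAt_of_integrableOn_Ioi (a := 0) (fun x _ => hderiv x)
    (integrable_eval_mul_exp _).integrableOn (integrable_eval_mul_exp p).integrableOn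
  have hint : halfGauss (derivative p - X * p) = -p.eval 0 := by
    rw [halfGauss_apply, integral_Ioi_of_hasDerivAt_of_tendsto' (fun x _ => hderiv x)
      (integrable_eval_mul_exp _).integrableOn hlim]
    simp
  rw [map_sub] at hint
  linarith

lemma halfGauss_X_pow_odd (i : ℕ) : halfGauss (X ^ (2 * i + 1)) = (2 * i).doubleFactorial := by
  induction i with
  | zero => simpa using halfGauss_X_mul 1
  | succ i ih =>
    have h : halfGauss (X * X ^ (2 * i + 2)) = (2 * i + 2) * halfGauss (X ^ (2 * i + 1)) := by
      rw [halfGauss_X_mul, derivative_X_pow, halfGauss_C_mul]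
      simp
    rw [show 2 * (i + 1) = 2 * i + 2 by ring, pow_succ', h, ih, Nat.doubleFactorial_add_two]
    push_cast
    ring

lemma halfGauss_X : halfGauss X = 1 := by simpa using halfGauss_X_pow_odd 0

lemma Sstar_eq_halfGauss (k m : ℕ) : Sstar k m = halfGauss (X ^ k * He m) := by
  simp [halfGauss_apply, Sstar]

end HalfGaussian

section Hermite

lemma X_mul_He (n : ℕ) : X * He (n + 1) = He (n + 2) + C ((n : ℝ) + 1) * He n := by
  rw [He]; ring

lemma derivative_He_succ (n : ℕ) : derivative (He (n + 1)) = C ((n : ℝ) + 1) * He n := by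
  induction n using Nat.twoStepInduction with
  | zero => simp [He]
  | one => simp [He]; ring
  | more n ih₀ ih₁ =>
    rw [He, derivative_sub, derivative_mul, derivative_mul, ih₀, ih₁, derivative_X,
      derivative_C, He]
    simp only [map_add, map_one, Nat.cast_add, Nat.cast_one, Nat.cast_ofNat, C_ofNat]
    ring

lemma He_succ (n : ℕ) : He (n + 1) = X * He n - derivative (He n) := by
  cases n with
  | zero => simp [He]
  | succ n => rw [derivative_He_succ, He]

lemma He_eq_map_hermite (n : ℕ) : He n = (hermite n).map (Int.castRingHom ℝ) := by
  induction n with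
  | zero => simp [He]
  | succ n ih => simp [He_succ, hermite_succ, ih, derivative_map]

lemma eval_zero_He_add_two (n : ℕ) :
    (He (n + 2)).eval 0 = -((n : ℝ) + 1) * (He n).eval 0 := by
  simp [He]; ring

lemma eval_zero_He_of_odd {n : ℕ} (hn : Odd n) : (He n).eval 0 = 0 := by
  rw [He_eq_map_hermite, ← coeff_zero_eq_eval_zero, coeff_map,
    coeff_hermite_of_odd_add (by simpa using hn), map_zero]

lemma neg_one_pow_mul_eval_zero_He_pos (i : ℕ) : 0 < (-1 : ℝ) ^ i * (He (2 * i)).eval 0 := by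
  induction i with
  | zero => simp [He]
  | succ i ih =>
    rw [mul_add_one, eval_zero_He_add_two,
      show (-1 : ℝ) ^ (i + 1) * (-(((2 * i : ℕ) : ℝ) + 1) * (He (2 * i)).eval 0) =
        (((2 * i : ℕ) : ℝ) + 1) * ((-1) ^ i * (He (2 * i)).eval 0) by ring]
    positivity

lemma halfGauss_He_succ_mul (n : ℕ) (p : ℝ[X]) :
    halfGauss (He (n + 1) * p) =
      halfGauss (He n * derivative p) + (He n).eval 0 * p.eval 0 := by
  have h := halfGauss_X_mul (He n * p)
  rw [derivative_mul, map_add, eval_mul] at h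
  rw [He_succ, sub_mul, map_sub, mul_assoc]
  linarith

lemma halfGauss_He_succ (n : ℕ) : halfGauss (He (n + 1)) = (He n).eval 0 := by
  simpa using halfGauss_He_succ_mul n 1

lemma halfGauss_He_succ_mul_He_succ (m n : ℕ) :
    halfGauss (He (m + 1) * He (n + 1)) =
      (n + 1) * halfGauss (He m * He n) + (He m).eval 0 * (He (n + 1)).eval 0 := by
  rw [halfGauss_He_succ_mul, derivative_He_succ, mul_left_comm, halfGauss_C_mul]

lemma halfGauss_He_mul_He_of_even_add {m n : ℕ} (h : Even (m + n)) :
    halfGauss (He m * He n) = if m = n then m.factorial * halfGauss 1 else 0 := by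
  induction m generalizing n with
  | zero =>
    cases n with
    | zero => simp [He]
    | succ n =>
      rw [He, one_mul, halfGauss_He_succ, eval_zero_He_of_odd (by grind)]
      simp
  | succ m ih =>
    cases n with
    | zero =>
      rw [He, mul_one, halfGauss_He_succ, eval_zero_He_of_odd (by grind)]
      simp
    | succ n =>
      have h0 : (He m).eval 0 * (He (n + 1)).eval 0 = 0 := by
        rcases m.even_or_odd with hm | hm
        · rw [eval_zero_He_of_odd (n := n + 1) (by grind), mul_zero]
        · rw [eval_zero_He_of_odd hm, zero_mul]
      rw [halfGauss_He_succ_mul_He_succ, h0, ih (by grind)]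
      by_cases hmn : m = n
      · subst hmn
        simp [Nat.factorial_succ, mul_assoc]
      · simp [hmn]

/-- Subtract the two reductions of `L (He (m + 1) * He (n + 1))` obtained by integrating either
factor by parts. -/
lemma sub_mul_halfGauss_He_mul_He (m n : ℕ) :
    ((n : ℝ) - m) * halfGauss (He m * He n) =
      (He (m + 1)).eval 0 * (He n).eval 0 - (He m).eval 0 * (He (n + 1)).eval 0 := by
  have hm := halfGauss_He_succ_mul_He_succ m n
  have hn := halfGauss_He_succ_mul_He_succ n m
  rw [mul_comm (He (n + 1)), mul_comm (He n)] at hn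
  linarith

lemma halfGauss_He_even_mul_He_odd (i j : ℕ) :
    (2 * (j : ℝ) + 1 - 2 * i) * halfGauss (He (2 * i) * He (2 * j + 1)) =
      (2 * j + 1) * ((He (2 * i)).eval 0 * (He (2 * j)).eval 0) := by
  have h := sub_mul_halfGauss_He_mul_He (2 * i) (2 * j + 1)
  rw [eval_zero_He_of_odd (odd_two_mul_add_one i), eval_zero_He_add_two] at h
  push_cast at h
  linarith

lemma halfGauss_X_mul_He_odd_mul_He_odd (i j : ℕ) :
    (1 - (2 * (j : ℝ) - 2 * i) ^ 2) * halfGauss (X * (He (2 * i + 1) * He (2 * j + 1))) =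
      2 * (2 * i + 1) * (2 * j + 1) * ((He (2 * i)).eval 0 * (He (2 * j)).eval 0) := by
  have h₀ := halfGauss_He_even_mul_He_odd i j
  have h₁ := halfGauss_He_even_mul_He_odd (i + 1) j
  rw [mul_add_one, eval_zero_He_add_two] at h₁
  rw [← mul_assoc, X_mul_He, add_mul, map_add, mul_assoc, halfGauss_C_mul]
  push_cast at h₁ ⊢
  linear_combination
    -(1 + 2 * (j : ℝ) - 2 * i) * h₁ + (2 * i + 1) * (1 - 2 * (j : ℝ) + 2 * i) * h₀

lemma neg_one_pow_mul_halfGauss_X_mul_He_odd_mul_He_odd_nonpos {i j : ℕ} (hij : i ≠ j) :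
    (-1) ^ i * (-1) ^ j * halfGauss (X * (He (2 * i + 1) * He (2 * j + 1))) ≤ 0 := by
  have hsq : 1 ≤ ((j : ℝ) - i) ^ 2 := by
    have : (j : ℤ) - i ≠ 0 := by omega
    exact_mod_cast Int.add_one_le_of_lt (sq_pos_of_ne_zero this)
  have hi := neg_one_pow_mul_eval_zero_He_pos i
  have hj := neg_one_pow_mul_eval_zero_He_pos j
  refine nonpos_of_mul_nonneg_right (a := 1 - (2 * (j : ℝ) - 2 * i) ^ 2) ?_ (by nlinarith)
  calc (0 : ℝ) ≤ 2 * (2 * i + 1) * (2 * j + 1) *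
        (((-1) ^ i * (He (2 * i)).eval 0) * ((-1) ^ j * (He (2 * j)).eval 0)) := by positivity
    _ = _ := by
      linear_combination (-1) ^ i * (-1) ^ j * -halfGauss_X_mul_He_odd_mul_He_odd i j

lemma neg_one_pow_mul_halfGauss_X_sq_mul_He_odd_mul_He_odd_nonpos {i j : ℕ} (hij : i ≠ j) :
    (-1) ^ i * (-1) ^ j * halfGauss (X ^ 2 * (He (2 * i + 1) * He (2 * j + 1))) ≤ 0 := by
  have hγ := halfGauss_one_pos
  have hexp : X ^ 2 * (He (2 * i + 1) * He (2 * j + 1)) =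
      He (2 * i + 2) * He (2 * j + 2) + C (2 * (j : ℝ) + 1) * (He (2 * i + 2) * He (2 * j)) +
        C (2 * (i : ℝ) + 1) * (He (2 * i) * He (2 * j + 2)) +
          C ((2 * (i : ℝ) + 1) * (2 * j + 1)) * (He (2 * i) * He (2 * j)) := by
    calc _ = (X * He (2 * i + 1)) * (X * He (2 * j + 1)) := by ring
      _ = _ := by
        rw [X_mul_He, X_mul_He, C_mul]
        push_cast
        ring
  have hsign {a b : ℕ} (hab : b = a + 1) : (-1 : ℝ) ^ a * (-1) ^ b = -1 := by
    rw [← pow_add, hab, ← add_assoc, pow_succ, Even.neg_one_pow ⟨a, rfl⟩, one_mul]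
  rw [hexp, map_add, map_add, map_add, halfGauss_C_mul, halfGauss_C_mul, halfGauss_C_mul,
    halfGauss_He_mul_He_of_even_add (by grind), halfGauss_He_mul_He_of_even_add (by grind),
    halfGauss_He_mul_He_of_even_add (by grind), halfGauss_He_mul_He_of_even_add (by grind),
    if_neg (by omega), if_neg (show 2 * i ≠ 2 * j by omega), mul_zero, add_zero, zero_add]
  split_ifs with h₁ h₂ h₂
  · omega
  · rw [hsign (a := i) (b := j) (by omega), mul_zero, add_zero, neg_one_mul, neg_nonpos]
    positivity
  · rw [mul_comm ((-1) ^ i), hsign (a := j) (b := i) (by omega), mul_zero, zero_add, neg_one_mul,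
      neg_nonpos]
    positivity
  · simp

lemma halfGauss_He_odd_mul_eq_zero {K : ℕ} {F : ℝ[X]}
    (hF : ∀ i ≤ K, halfGauss (X ^ (2 * i + 1) * F) = 0) {j : ℕ} (hj : j ≤ K) :
    halfGauss (He (2 * j + 1) * F) = 0 := by
  have hdeg : (He (2 * j + 1)).natDegree < 2 * j + 2 := by
    rw [He_eq_map_hermite]
    exact natDegree_map_le.trans_lt (by rw [natDegree_hermite]; omega)
  rw [as_sum_range_C_mul_X_pow' _ hdeg, Finset.sum_mul, map_sum]
  refine Finset.sum_eq_zero fun k hk => ?_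
  rw [mul_assoc, halfGauss_C_mul]
  rcases k.even_or_odd' with ⟨i, rfl | rfl⟩
  · rw [He_eq_map_hermite, coeff_map, coeff_hermite_of_odd_add (by grind), map_zero, zero_mul]
  · rw [hF i (by grind), mul_zero]

end Hermite

section Stieltjes

variable {ι : Type*}

open scoped MatrixOrder

open scoped Matrix.Norms.L2Operator in
lemma cfcₙ_rpowIntegrand₀₁_of_posDef [Fintype ι] [DecidableEq ι] {A : Matrix ι ι ℝ}
    (hA : A.PosDef) {p t : ℝ} (hp : p ≠ 1) (ht : 0 < t) :
    cfcₙ (rpowIntegrand₀₁ p t) A = t ^ (p - 1) • 1 - t ^ p • (A + t • 1)⁻¹ := by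
  have hcont (f : ℝ → ℝ) : ContinuousOn f (spectrum ℝ A) := A.finite_real_spectrum.continuousOn f
  have hcont₀ : ContinuousOn (rpowIntegrand₀₁ p t) (quasispectrum ℝ A) :=
    (quasispectrum_eq_spectrum_union_zero ℝ A ▸
      A.finite_real_spectrum.union (Set.finite_singleton 0)).continuousOn _
  have hsa : IsSelfAdjoint A := hA.isHermitian
  have hne : ∀ r ∈ spectrum ℝ A, t + r ≠ 0 := fun r hr =>
    (add_pos_of_pos_of_nonneg ht
      (spectrum_nonneg_of_nonneg (nonneg_iff_posSemidef.mpr hA.posSemidef) hr)).ne'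
  have hresolvent : cfc (fun r => (t + r)⁻¹) A = (A + t • 1)⁻¹ := by
    rw [cfc_inv (fun r => t + r) A hne (hcont _) hsa, cfc_const_add t (fun r => r) A (hcont _) hsa,
      cfc_id' ℝ A hsa, ← nonsing_inv_eq_ringInverse, Algebra.algebraMap_eq_smul_one, add_comm A]
  rw [cfcₙ_eq_cfc (hf := hcont₀) (hf0 := rpowIntegrand₀₁_zero_right),
    rpowIntegrand₀₁_eq_sub hp ht,
    cfc_sub (fun _ : ℝ => t ^ (p - 1)) (fun r : ℝ => t ^ p * (t + r)⁻¹) A (hcont _) (hcont _),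
    cfc_const (t ^ (p - 1)) A hsa,
    cfc_const_mul (t ^ p) (fun r => (t + r)⁻¹) A (hcont _), hresolvent,
    Algebra.algebraMap_eq_smul_one]

/-- A Stieltjes matrix: a symmetric positive definite real matrix with nonpositive off-diagonal
entries. These are exactly the symmetric nonsingular M-matrices. -/
structure IsStieltjes (A : Matrix ι ι ℝ) : Prop where
  posDef : A.PosDef
  apply_nonpos : ∀ ⦃i j⦄, i ≠ j → A i j ≤ 0

namespace IsStieltjes

variable {A B : Matrix ι ι ℝ}

lemma add_smul (hA : IsStieltjes A) (hB : IsStieltjes B) {c : ℝ} (hc : 0 ≤ c) :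
    IsStieltjes (A + c • B) where
  posDef := hA.posDef.add_posSemidef (hB.posDef.posSemidef.smul hc)
  apply_nonpos _ _ hij :=
    add_nonpos (hA.apply_nonpos hij) (mul_nonpos_of_nonneg_of_nonpos hc (hB.apply_nonpos hij))

lemma one [DecidableEq ι] : IsStieltjes (1 : Matrix ι ι ℝ) where
  posDef := .one
  apply_nonpos _ _ hij := (one_apply_ne hij).le

variable [Fintype ι]

lemma nonneg_of_mulVec_nonneg (hA : IsStieltjes A) {x : ι → ℝ} (hx : 0 ≤ A *ᵥ x) : 0 ≤ x := by
  have hcross : x⁻ ⬝ᵥ A *ᵥ x⁺ ≤ 0 := by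
    refine Finset.sum_nonpos fun i _ => ?_
    rw [mulVec, dotProduct, Finset.mul_sum]
    refine Finset.sum_nonpos fun j _ => ?_
    rcases eq_or_ne i j with rfl | hij
    · have : x⁻ i * x⁺ i = 0 := by
        rcases le_total 0 (x i) with h | h <;> simp [h]
      rw [mul_left_comm, this, mul_zero]
    · exact mul_nonpos_of_nonneg_of_nonpos (negPart_nonneg x i)
        (mul_nonpos_of_nonpos_of_nonneg (hA.apply_nonpos hij) (posPart_nonneg x j))
  have hsplit : x⁻ ⬝ᵥ A *ᵥ x = x⁻ ⬝ᵥ A *ᵥ x⁺ - x⁻ ⬝ᵥ A *ᵥ x⁻ := by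
    rw [← dotProduct_sub, ← mulVec_sub, posPart_sub_negPart]
  have hpair : 0 ≤ x⁻ ⬝ᵥ A *ᵥ x :=
    dotProduct_nonneg_of_nonneg (negPart_nonneg x) hx
  rw [← negPart_eq_zero]
  by_contra hne
  have hpos := hA.posDef.dotProduct_mulVec_pos hne
  rw [star_trivial] at hpos
  linarith

lemma inv_apply_nonneg [DecidableEq ι] (hA : IsStieltjes A) (i j : ι) : 0 ≤ A⁻¹ i j := by
  have hcol : A *ᵥ A⁻¹.col j = Pi.single j 1 := by
    rw [← mulVec_single_one, mulVec_mulVec,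
      A.mul_nonsing_inv ((isUnit_iff_isUnit_det A).mp hA.posDef.isUnit), one_mulVec]
  exact hA.nonneg_of_mulVec_nonneg (hcol ▸ Pi.single_nonneg.mpr zero_le_one) i

/-- The bordered matrix `[[1, rᵀ], [-p, A]]` has trivial kernel. -/
lemma eq_zero_of_mulVec_eq_smul (hA : IsStieltjes A) {p r x : ι → ℝ} {a : ℝ} (hp : 0 ≤ p)
    (hr : 0 ≤ r) (hAx : A *ᵥ x = a • p) (hrx : a + r ⬝ᵥ x = 0) : x = 0 := by
  classical
  have hdet := (isUnit_iff_isUnit_det A).mp hA.posDef.isUnit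
  have hx : x = a • (A⁻¹ *ᵥ p) := by
    rw [← mulVec_smul, ← hAx, mulVec_mulVec, A.nonsing_inv_mul hdet, one_mulVec]
  have hinv : 0 ≤ A⁻¹ *ᵥ p := fun i =>
    dotProduct_nonneg_of_nonneg (hA.inv_apply_nonneg i) hp
  have ha : a * (1 + r ⬝ᵥ A⁻¹ *ᵥ p) = 0 := by
    rw [mul_add, mul_one, ← smul_eq_mul, ← dotProduct_smul, ← hx, hrx]
  have : 0 ≤ r ⬝ᵥ A⁻¹ *ᵥ p := dotProduct_nonneg_of_nonneg hr hinv
  rw [hx, (mul_eq_zero.mp ha).resolve_right (by positivity), zero_smul]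

variable [DecidableEq ι]

open scoped NNReal

open scoped Matrix.Norms.L2Operator in
/-- A fractional power is a positive superposition of the matrices `t⁻¹ • 1 - (A + t • 1)⁻¹`,
whose off-diagonal entries are nonpositive. -/
lemma nnrpow (hA : IsStieltjes A) {p : ℝ≥0} (hp : p ∈ Set.Ioo 0 1) : IsStieltjes (A ^ p) where
  posDef := isStrictlyPositive_iff_posDef.mp
    (.nnrpow A p hp.1.ne' (isStrictlyPositive_iff_posDef.mpr hA.posDef))
  apply_nonpos i j hij := by
    obtain ⟨μ, hμ⟩ := CFC.exists_measure_nnrpow_eq_integral_cfcₙ_rpowIntegrand₀₁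
      (Matrix ι ι ℝ) hp
    obtain ⟨hint, hpow⟩ := hμ A (nonneg_iff_posSemidef.mpr hA.posDef.posSemidef)
    have hentry : (A ^ p) i j = ∫ t in Set.Ioi 0, cfcₙ (rpowIntegrand₀₁ p t) A i j ∂μ := by
      rw [hpow]
      exact ((entryLinearMap ℝ ℝ i j).toContinuousLinearMap.integral_comp_comm hint).symm
    rw [hentry]
    refine setIntegral_nonpos measurableSet_Ioi fun t ht => ?_
    have hinv : 0 ≤ (A + t • 1)⁻¹ i j := (hA.add_smul one (le_of_lt ht)).inv_apply_nonneg i j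
    rw [cfcₙ_rpowIntegrand₀₁_of_posDef hA.posDef (by exact_mod_cast hp.2.ne) ht,
      Matrix.sub_apply, Matrix.smul_apply, Matrix.smul_apply, one_apply_ne hij, smul_zero, zero_sub,
      neg_nonpos]
    exact mul_nonneg (rpow_nonneg (le_of_lt ht) _) hinv

open scoped Matrix.Norms.L2Operator in
lemma sqrt (hA : IsStieltjes A) : IsStieltjes (CFC.sqrt A) :=
  CFC.sqrt_eq_nnrpow A ▸ hA.nnrpow ⟨by norm_num, by norm_num⟩

end IsStieltjes

lemma sqrt_mulVec_eq_smul [Fintype ι] [DecidableEq ι] {A : Matrix ι ι ℝ} (hA : A.PosDef)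
    {e : ι → ℝ} {μ : ℝ} (hμ : 0 ≤ μ) (he : A *ᵥ e = μ ^ 2 • e) : CFC.sqrt A *ᵥ e = μ • e := by
  have hS : (CFC.sqrt A).PosDef :=
    isStrictlyPositive_iff_posDef.mp (isStrictlyPositive_iff_posDef.mpr hA).sqrt
  have hsq : CFC.sqrt A * CFC.sqrt A = A :=
    CFC.sqrt_mul_sqrt_self A (nonneg_iff_posSemidef.mpr hA.posSemidef)
  have hunit : IsUnit (CFC.sqrt A + μ • 1) :=
    (hS.add_posSemidef (PosSemidef.one.smul hμ)).isUnit
  refine sub_eq_zero.mp (mulVec_injective_iff_isUnit.mpr hunit ?_)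
  calc (CFC.sqrt A + μ • 1) *ᵥ (CFC.sqrt A *ᵥ e - μ • e)
      = (CFC.sqrt A * CFC.sqrt A) *ᵥ e - μ ^ 2 • e := by
        rw [add_mulVec, smul_mulVec, one_mulVec, mulVec_sub, mulVec_smul, mulVec_mulVec, smul_sub,
          smul_smul, pow_two]
        abel
    _ = (CFC.sqrt A + μ • 1) *ᵥ 0 := by rw [hsq, he, sub_self, mulVec_zero]

end Stieltjes

section Eigenpolynomials

/-- The coefficient `Ĥe_l(x) / (l + 2)!`; at the roots of `Ĥe_n` these are the entries of the
matrix `R̂`. -/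
noncomputable def hatCoeff (x : ℝ) (l : ℕ) : ℝ :=
  (Hhat l).eval x / (l + 2).factorial

lemma hatCoeff_zero (x : ℝ) : hatCoeff x 0 = 1 / 2 := by simp [hatCoeff, Hhat]

lemma hatCoeff_one (x : ℝ) : hatCoeff x 1 = x / 6 := by
  simp [hatCoeff, Hhat, Nat.factorial]

lemma mul_hatCoeff_succ (x : ℝ) (l : ℕ) :
    x * hatCoeff x (l + 1) = hatCoeff x l + ((l : ℝ) + 4) * hatCoeff x (l + 2) := by
  have : ((l + 2).factorial : ℝ) ≠ 0 := by positivity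
  simp only [hatCoeff, Hhat, eval_sub, eval_mul, eval_X, eval_C, Nat.factorial_succ (l + 3),
    Nat.factorial_succ (l + 2), Nat.cast_mul, Nat.cast_add, Nat.cast_one, Nat.cast_ofNat]
  field_simp
  ring

/-- The part of even degree `≤ 2K + 2` of the formal eigenfunction `∑ₗ Ĥe_l(x)/(l+2)! He_{l+2}` of
multiplication by the variable. -/
noncomputable def evenEig (K : ℕ) (x : ℝ) : ℝ[X] :=
  ∑ i ∈ Finset.range (K + 1), hatCoeff x (2 * i) • He (2 * i + 2)

/-- The part of odd degree `≤ 2K + 1` of the formal eigenfunction `∑ₗ Ĥe_l(x)/(l+2)! He_{l+2}` of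
multiplication by the variable. -/
noncomputable def oddEig (K : ℕ) (x : ℝ) : ℝ[X] :=
  ∑ i ∈ Finset.range K, hatCoeff x (2 * i + 1) • He (2 * i + 3)

lemma evenEig_succ (K : ℕ) (x : ℝ) :
    evenEig (K + 1) x = evenEig K x + hatCoeff x (2 * K + 2) • He (2 * K + 4) :=
  Finset.sum_range_succ _ _

lemma oddEig_succ (K : ℕ) (x : ℝ) :
    oddEig (K + 1) x = oddEig K x + hatCoeff x (2 * K + 1) • He (2 * K + 3) :=
  Finset.sum_range_succ _ _

lemma X_mul_oddEig (K : ℕ) (x : ℝ) :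
    X * oddEig K x =
      x • evenEig K x - ((2 * K + 3) * hatCoeff x (2 * K + 1)) • He (2 * K + 2) := by
  induction K with
  | zero =>
    have hcoeff : x / 2 - 3 * (x / 6) = 0 := by ring
    simp [oddEig, evenEig, hatCoeff_zero, hatCoeff_one, smul_smul, ← sub_smul, ← div_eq_mul_inv,
      hcoeff]
  | succ K ih =>
    have hrec := congrArg C (mul_hatCoeff_succ x (2 * K + 1))
    have hX := X_mul_He (2 * K + 2)
    rw [oddEig_succ, evenEig_succ, mul_add, ih]
    push_cast at hrec hX ⊢
    simp only [smul_eq_C_mul, C_mul, C_add, C_1, map_ofNat] at hrec hX ⊢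
    linear_combination C (hatCoeff x (2 * K + 1)) * hX - He (2 * K + 4) * hrec

lemma X_mul_evenEig (K : ℕ) (x : ℝ) :
    X * evenEig K x = X + x • oddEig K x + hatCoeff x (2 * K) • He (2 * K + 3) := by
  induction K with
  | zero =>
    have hX : X * He 2 = He 3 + (2 : ℝ) • X := by
      rw [X_mul_He 1, smul_eq_C_mul, He]
      norm_num
    simp [oddEig, evenEig, hatCoeff_zero, hX, smul_smul, add_comm]
  | succ K ih =>
    have hrec := congrArg C (mul_hatCoeff_succ x (2 * K))
    have hX := X_mul_He (2 * K + 3)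
    rw [oddEig_succ, evenEig_succ, mul_add, ih]
    push_cast at hrec hX ⊢
    simp only [smul_eq_C_mul, C_mul, C_add, C_1, map_ofNat] at hrec hX ⊢
    linear_combination C (hatCoeff x (2 * K + 2)) * hX - He (2 * K + 3) * hrec

lemma halfGauss_oddEig_mul_He {K m : ℕ} (hm : Odd m) (x : ℝ) (hne : ∀ i < K, 2 * i + 3 ≠ m) :
    halfGauss (oddEig K x * He m) = 0 := by
  rw [oddEig, Finset.sum_mul, map_sum]
  refine Finset.sum_eq_zero fun i hi => ?_
  rw [smul_mul_assoc, map_smul, halfGauss_He_mul_He_of_even_add (by grind),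
    if_neg (hne i (Finset.mem_range.mp hi)), smul_zero]

lemma halfGauss_oddEig_mul_He_odd {K i : ℕ} (hi : i < K) (x : ℝ) :
    halfGauss (oddEig K x * He (2 * i + 3)) =
      hatCoeff x (2 * i + 1) * ((2 * i + 3).factorial * halfGauss 1) := by
  rw [oddEig, Finset.sum_mul, map_sum, Finset.sum_eq_single_of_mem i (Finset.mem_range.mpr hi)]
  · rw [smul_mul_assoc, map_smul, halfGauss_He_mul_He_of_even_add (by grind), if_pos rfl,
      smul_eq_mul]
  · intro j _ hji
    rw [smul_mul_assoc, map_smul, halfGauss_He_mul_He_of_even_add (by grind),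
      if_neg (by omega), smul_zero]

lemma halfGauss_He_mul_evenEig (K : ℕ) (x : ℝ) :
    halfGauss (He (2 * K + 2) * evenEig K x) =
      hatCoeff x (2 * K) * ((2 * K + 2).factorial * halfGauss 1) := by
  rw [evenEig, Finset.mul_sum, map_sum,
    Finset.sum_eq_single_of_mem K (Finset.self_mem_range_succ K)]
  · rw [mul_smul_comm, map_smul, halfGauss_He_mul_He_of_even_add (by grind), if_pos rfl,
      smul_eq_mul]
  · intro j _ hji
    rw [mul_smul_comm, map_smul, halfGauss_He_mul_He_of_even_add (by grind),
      if_neg (by omega), smul_zero]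

lemma halfGauss_oddEig_mul_X (K : ℕ) (x : ℝ) : halfGauss (oddEig K x * X) = 0 :=
  halfGauss_oddEig_mul_He odd_one x (by omega)

/-- A Christoffel–Darboux identity, from evaluating `L(X · o_x · e_y)` in two ways. -/
lemma mul_halfGauss_oddEig_mul_oddEig (K : ℕ) (x y : ℝ) :
    y * halfGauss (oddEig K x * oddEig K y) =
      x * halfGauss (evenEig K x * evenEig K y) -
        (2 * K + 3).factorial * halfGauss 1 * (hatCoeff x (2 * K + 1) * hatCoeff y (2 * K)) := by
  have hodd : halfGauss (oddEig K x * He (2 * K + 3)) = 0 :=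
    halfGauss_oddEig_mul_He (by grind) x (by omega)
  calc y * halfGauss (oddEig K x * oddEig K y)
      = halfGauss (oddEig K x * (X * evenEig K y)) := by
        rw [X_mul_evenEig, mul_add, mul_add, map_add, map_add, mul_smul_comm, mul_smul_comm,
          map_smul, map_smul, halfGauss_oddEig_mul_X, hodd, smul_zero, smul_eq_mul, zero_add,
          add_zero]
    _ = halfGauss ((X * oddEig K x) * evenEig K y) := by rw [mul_left_comm, ← mul_assoc]
    _ = _ := by
        rw [X_mul_oddEig, sub_mul, smul_mul_assoc, smul_mul_assoc, map_sub, map_smul, map_smul,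
          halfGauss_He_mul_evenEig, Nat.factorial_succ (2 * K + 2), smul_eq_mul, smul_eq_mul]
        push_cast
        ring

lemma halfGauss_oddEig_mul_oddEig_eq_zero {K : ℕ} {x y : ℝ} (hx : 0 < x) (hy : 0 < y)
    (hxy : x ≠ y) (hx_bdry : hatCoeff x (2 * K + 1) * hatCoeff y (2 * K) = 0)
    (hy_bdry : hatCoeff y (2 * K + 1) * hatCoeff x (2 * K) = 0) :
    halfGauss (oddEig K x * oddEig K y) = 0 := by
  have h₁ := mul_halfGauss_oddEig_mul_oddEig K x y
  have h₂ := mul_halfGauss_oddEig_mul_oddEig K y x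
  rw [hx_bdry, mul_zero, sub_zero] at h₁
  rw [hy_bdry, mul_zero, sub_zero, mul_comm (oddEig K y), mul_comm (evenEig K y)] at h₂
  have hsq : (x ^ 2 - y ^ 2) * halfGauss (oddEig K x * oddEig K y) = 0 := by
    linear_combination x * h₂ - y * h₁
  refine (mul_eq_zero.mp hsq).resolve_left (sub_ne_zero.mpr fun h => hxy ?_)
  exact (pow_left_inj₀ hx.le hy.le two_ne_zero).mp h

lemma halfGauss_oddEig_mul_self_pos {K : ℕ} (hK : 0 < K) {x : ℝ} (hx : 0 < x) :
    0 < halfGauss (oddEig K x * oddEig K x) := by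
  have hne : oddEig K x ≠ 0 := by
    intro h
    have hγ := halfGauss_one_pos
    have := halfGauss_oddEig_mul_He_odd hK x
    rw [h, zero_mul, map_zero, hatCoeff_one] at this
    exact absurd this (by positivity)
  exact halfGauss_pos (mul_ne_zero hne hne) fun t _ => by
    rw [eval_mul]
    exact mul_self_nonneg _

end Eigenpolynomials

section Gram

/-- The odd Hermite polynomials `He_{2i+3}`, normalized for the pairing `(p, q) ↦ L(p * q)` with
`L = halfGauss`. The alternating signs make the Gram matrices below Stieltjes matrices. -/
noncomputable def signedHe (i : ℕ) : ℝ[X] :=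
  ((-1) ^ i / √((2 * i + 3).factorial * halfGauss 1)) • He (2 * i + 3)

/-- The Gram matrix of `signedHe 0, …, signedHe (K - 1)` for the weight `w * exp (-x ^ 2 / 2)` on
the half-line. -/
noncomputable def weightedGram (K : ℕ) (w : ℝ[X]) : Matrix (Fin K) (Fin K) ℝ :=
  Matrix.of fun i j => halfGauss (w * (signedHe i * signedHe j))

/-- The odd polynomial with coordinates `x` in the basis `signedHe`. -/
noncomputable def oddComb (K : ℕ) : (Fin K → ℝ) →ₗ[ℝ] ℝ[X] :=
  Fintype.linearCombination ℝ fun i : Fin K => signedHe i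

variable {K : ℕ}

lemma signedHe_norm_pos (i : ℕ) : 0 < √((2 * i + 3).factorial * halfGauss 1) :=
  sqrt_pos.mpr (mul_pos (by positivity) halfGauss_one_pos)

lemma halfGauss_mul_oddComb (p : ℝ[X]) (x : Fin K → ℝ) :
    halfGauss (p * oddComb K x) = ∑ i : Fin K, halfGauss (p * signedHe i) * x i := by
  simp only [oddComb, Fintype.linearCombination_apply, Finset.mul_sum, map_sum, mul_smul_comm,
    map_smul, smul_eq_mul, mul_comm (x _)]

lemma halfGauss_mul_signedHe_eq_zero {p : ℝ[X]} {i : ℕ} (h : halfGauss (p * He (2 * i + 3)) = 0) :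
    halfGauss (p * signedHe i) = 0 := by
  rw [signedHe, mul_smul_comm, map_smul, h, smul_zero]

lemma halfGauss_signedHe_mul_signedHe (i j : ℕ) :
    halfGauss (signedHe i * signedHe j) = if i = j then 1 else 0 := by
  rw [signedHe, signedHe, smul_mul_smul_comm, map_smul,
    halfGauss_He_mul_He_of_even_add (by grind)]
  split_ifs with h₁ h₂ h₂
  · subst h₂
    have hpos : 0 < (2 * i + 3).factorial * halfGauss 1 :=
      mul_pos (by positivity) halfGauss_one_pos
    rw [div_mul_div_comm, ← mul_pow, neg_one_mul, neg_neg, one_pow, mul_self_sqrt hpos.le,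
      smul_eq_mul, one_div_mul_cancel hpos.ne']
  · omega
  · omega
  · rw [smul_zero]

lemma halfGauss_signedHe_mul_oddComb (x : Fin K → ℝ) (i : Fin K) :
    halfGauss (signedHe i * oddComb K x) = x i := by
  simp [halfGauss_mul_oddComb, halfGauss_signedHe_mul_signedHe, Fin.val_inj]

lemma halfGauss_X_mul_signedHe (i : ℕ) : halfGauss (X * signedHe i) = 0 :=
  halfGauss_mul_signedHe_eq_zero <|
    (halfGauss_He_mul_He_of_even_add (m := 1) (by grind)).trans (if_neg (by omega))

lemma halfGauss_X_mul_oddComb (x : Fin K → ℝ) : halfGauss (X * oddComb K x) = 0 := by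
  simp [halfGauss_mul_oddComb, halfGauss_X_mul_signedHe]

lemma exists_oddComb_eq_oddEig (K : ℕ) (x : ℝ) : ∃ E, oddComb K E = oddEig K x := by
  refine ⟨fun i => hatCoeff x (2 * i + 1) *
    ((-1) ^ (i : ℕ) * √((2 * (i : ℕ) + 3).factorial * halfGauss 1)), ?_⟩
  rw [oddComb, Fintype.linearCombination_apply, oddEig, Finset.sum_range]
  refine Finset.sum_congr rfl fun i _ => ?_
  rw [signedHe, smul_smul, mul_assoc, mul_div_assoc', mul_right_comm, ← mul_pow, neg_one_mul,
    neg_neg, one_pow, one_mul, div_self (signedHe_norm_pos i).ne', mul_one]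

lemma weightedGram_mulVec_apply (w : ℝ[X]) (x : Fin K → ℝ) (i : Fin K) :
    (weightedGram K w *ᵥ x) i = halfGauss (signedHe i * (w * oddComb K x)) := by
  simp only [← mul_assoc, halfGauss_mul_oddComb]
  simp only [mulVec, dotProduct, weightedGram, of_apply, mul_comm (signedHe (i : ℕ)), mul_assoc]

lemma weightedGram_posDef {w : ℝ[X]} (hw : w ≠ 0) (hnonneg : ∀ t, 0 < t → 0 ≤ w.eval t) :
    (weightedGram K w).PosDef := by
  refine PosDef.of_dotProduct_mulVec_pos ?_ fun x hx => ?_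
  · ext i j
    simp [weightedGram, mul_comm (signedHe i)]
  have hcomb : oddComb K x ≠ 0 := fun h => hx <| funext fun i => by
    rw [← halfGauss_signedHe_mul_oddComb x, h, mul_zero, map_zero, Pi.zero_apply]
  have hquad : star x ⬝ᵥ weightedGram K w *ᵥ x = halfGauss (w * (oddComb K x * oddComb K x)) := by
    rw [← mul_assoc, halfGauss_mul_oddComb]
    refine Finset.sum_congr rfl fun i _ => ?_
    rw [weightedGram_mulVec_apply, mul_comm (signedHe (i : ℕ)), mul_comm, star_trivial]
  rw [hquad]
  refine halfGauss_pos (mul_ne_zero hw (mul_ne_zero hcomb hcomb)) fun t ht => ?_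
  rw [eval_mul, eval_mul]
  exact mul_nonneg (hnonneg t ht) (mul_self_nonneg _)

lemma weightedGram_apply_nonpos {w : ℝ[X]} {i j : Fin K}
    (h : (-1) ^ (i + 1 : ℕ) * (-1) ^ (j + 1 : ℕ) *
      halfGauss (w * (He (2 * (i + 1) + 1) * He (2 * (j + 1) + 1))) ≤ 0) :
    weightedGram K w i j ≤ 0 := by
  have hi := signedHe_norm_pos i
  have hj := signedHe_norm_pos j
  rw [weightedGram, of_apply, signedHe, signedHe, smul_mul_smul_comm, mul_smul_comm, map_smul,
    div_mul_div_comm, smul_eq_mul, div_mul_eq_mul_div]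
  refine div_nonpos_of_nonpos_of_nonneg ?_ (mul_pos hi hj).le
  simpa [pow_succ, mul_add] using h

lemma isStieltjes_weightedGram_X : IsStieltjes (weightedGram K X) where
  posDef := weightedGram_posDef X_ne_zero fun t ht => by rw [eval_X]; exact ht.le
  apply_nonpos _ _ hij := weightedGram_apply_nonpos <|
    neg_one_pow_mul_halfGauss_X_mul_He_odd_mul_He_odd_nonpos (by omega)

lemma isStieltjes_weightedGram_X_sq : IsStieltjes (weightedGram K (X ^ 2)) where
  posDef := weightedGram_posDef (pow_ne_zero 2 X_ne_zero) fun t _ => by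
    rw [eval_pow]
    exact sq_nonneg _
  apply_nonpos _ _ hij := weightedGram_apply_nonpos <|
    neg_one_pow_mul_halfGauss_X_sq_mul_He_odd_mul_He_odd_nonpos (by omega)

lemma halfGauss_signedHe_neg (i : ℕ) : halfGauss (signedHe i) < 0 := by
  have hpos := neg_one_pow_mul_eval_zero_He_pos (i + 1)
  rw [signedHe, map_smul, halfGauss_He_succ, smul_eq_mul, div_mul_eq_mul_div]
  refine div_neg_of_neg_of_pos ?_ (signedHe_norm_pos i)
  rw [pow_succ, mul_add] at hpos
  linarith

lemma halfGauss_X_sq_mul_signedHe_nonneg (i : ℕ) : 0 ≤ halfGauss (X ^ 2 * signedHe i) := by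
  have h := neg_one_pow_mul_halfGauss_X_mul_He_odd_mul_He_odd_nonpos (i := 0) (j := i + 1)
    (by omega)
  have hone : He (2 * 0 + 1) = X := rfl
  rw [hone, ← mul_assoc, ← pow_two, pow_zero, one_mul, pow_succ, mul_add] at h
  rw [signedHe, mul_smul_comm, map_smul, smul_eq_mul, div_mul_eq_mul_div]
  refine div_nonneg ?_ (signedHe_norm_pos i).le
  linarith

lemma weightedGram_X_sq_mulVec {x : ℝ} (hx : hatCoeff x (2 * K + 1) = 0) {E : Fin K → ℝ}
    (hE : oddComb K E = oddEig K x) : weightedGram K (X ^ 2) *ᵥ E = x ^ 2 • E := by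
  funext i
  have hHe : halfGauss (He (2 * K + 3) * signedHe i) = 0 := by
    refine halfGauss_mul_signedHe_eq_zero ?_
    rw [halfGauss_He_mul_He_of_even_add (by grind), if_neg (by omega)]
  have hXX : X ^ 2 * oddEig K x =
      x • X + x ^ 2 • oddComb K E + (x * hatCoeff x (2 * K)) • He (2 * K + 3) := by
    rw [pow_two, mul_assoc, X_mul_oddEig, hx, mul_zero, zero_smul, sub_zero, mul_smul_comm,
      X_mul_evenEig, hE, smul_add, smul_add, smul_smul, smul_smul, pow_two]
  rw [weightedGram_mulVec_apply, hE, hXX, mul_add, mul_add, map_add, map_add, mul_smul_comm,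
    mul_smul_comm, mul_smul_comm, map_smul, map_smul, map_smul, halfGauss_signedHe_mul_oddComb,
    mul_comm (signedHe (i : ℕ)), halfGauss_X_mul_signedHe, mul_comm (signedHe (i : ℕ)), hHe,
    smul_zero, smul_zero, zero_add, add_zero, Pi.smul_apply]

end Gram

section Kernel

variable {K : ℕ} {κ : Type*} {lam v : κ → ℝ} {a c : ℝ}

lemma halfGauss_oddEig_mul_sum (hpos : ∀ k, 0 < lam k) (hinj : Function.Injective lam)
    (hbdry : ∀ k l, hatCoeff (lam k) (2 * K + 1) * hatCoeff (lam l) (2 * K) = 0) (y : κ → ℝ)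
    {s : Finset κ} {l : κ} (hl : l ∈ s) :
    halfGauss (oddEig K (lam l) * ∑ k ∈ s, y k • oddEig K (lam k)) =
      y l * halfGauss (oddEig K (lam l) * oddEig K (lam l)) := by
  rw [Finset.mul_sum, map_sum, Finset.sum_eq_single_of_mem l hl]
  · rw [mul_smul_comm, map_smul, smul_eq_mul]
  · intro k _ hkl
    rw [mul_smul_comm, map_smul, halfGauss_oddEig_mul_oddEig_eq_zero (hpos l) (hpos k)
      (hinj.ne hkl.symm) (hbdry l k) (hbdry k l), smul_zero]

lemma halfGauss_oddEig_mul_self_pos_of_bdry {x : ℝ} (hx : 0 < x)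
    (hbdry : hatCoeff x (2 * K + 1) * hatCoeff x (2 * K) = 0) :
    0 < halfGauss (oddEig K x * oddEig K x) := by
  refine halfGauss_oddEig_mul_self_pos (Nat.pos_of_ne_zero ?_) hx
  rintro rfl
  rw [hatCoeff_one, hatCoeff_zero] at hbdry
  exact absurd hbdry (by positivity)

lemma linearIndependent_oddEig (hpos : ∀ k, 0 < lam k) (hinj : Function.Injective lam)
    (hbdry : ∀ k l, hatCoeff (lam k) (2 * K + 1) * hatCoeff (lam l) (2 * K) = 0) :
    LinearIndependent ℝ fun k => oddEig K (lam k) := by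
  refine linearIndependent_iff'.mpr fun s y hy l hl => ?_
  have h := halfGauss_oddEig_mul_sum hpos hinj hbdry y hl
  rw [hy, mul_zero, map_zero] at h
  exact (mul_eq_zero.mp h.symm).resolve_right
    (halfGauss_oddEig_mul_self_pos_of_bdry (hpos l) (hbdry l l)).ne'

lemma halfGauss_X_mul_eq_zero {F : ℝ[X]} (hF : ∀ j ≤ K, halfGauss (He (2 * j + 1) * F) = 0) :
    halfGauss (X * F) = 0 :=
  hF 0 K.zero_le

lemma halfGauss_oddEig_mul_eq_zero {F : ℝ[X]}
    (hF : ∀ j ≤ K, halfGauss (He (2 * j + 1) * F) = 0) (x : ℝ) :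
    halfGauss (oddEig K x * F) = 0 := by
  rw [oddEig, Finset.sum_mul, map_sum]
  refine Finset.sum_eq_zero fun i hi => ?_
  rw [smul_mul_assoc, map_smul]
  exact smul_eq_zero_of_right _ (hF (i + 1) (Finset.mem_range.mp hi))

lemma halfGauss_signedHe_mul_eq_zero {F : ℝ[X]}
    (hF : ∀ j ≤ K, halfGauss (He (2 * j + 1) * F) = 0) (i : Fin K) :
    halfGauss (signedHe i * F) = 0 := by
  rw [signedHe, smul_mul_assoc, map_smul]
  exact smul_eq_zero_of_right _ (hF (i + 1) i.isLt)

variable [Fintype κ]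

lemma C_add_sum_smul_evenEig_add (K : ℕ) (lam v : κ → ℝ) (a c : ℝ) :
    C a + ∑ k, v k • (evenEig K (lam k) + c • oddEig K (lam k)) =
      C a + ∑ k, v k • evenEig K (lam k) + c • ∑ k, v k • oddEig K (lam k) := by
  simp only [smul_add, Finset.sum_add_distrib, smul_comm _ c, ← Finset.smul_sum, add_assoc]

lemma X_mul_C_add_sum_evenEig (hlam : ∀ k, hatCoeff (lam k) (2 * K) = 0) (a : ℝ) (v : κ → ℝ) :
    X * (C a + ∑ k, v k • evenEig K (lam k)) =
      (a + ∑ k, v k) • X + ∑ k, (v k * lam k) • oddEig K (lam k) := by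
  simp only [mul_add, Finset.mul_sum, mul_smul_comm, X_mul_evenEig, hlam, zero_smul, add_zero,
    smul_add, smul_smul, Finset.sum_add_distrib, ← Finset.sum_smul, add_smul, X_mul_C, ← add_assoc]
  rw [smul_eq_C_mul a]

lemma halfGauss_X_mul_C_add_sum_evenEig_mul (hlam : ∀ k, hatCoeff (lam k) (2 * K) = 0) (a : ℝ)
    (v : κ → ℝ) (p : ℝ[X]) :
    halfGauss (X * (C a + ∑ k, v k • evenEig K (lam k)) * p) =
      (a + ∑ k, v k) * halfGauss (X * p) +
        ∑ k, v k * lam k * halfGauss (oddEig K (lam k) * p) := by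
  simp only [X_mul_C_add_sum_evenEig hlam, add_mul _ _ p, smul_mul_assoc, Finset.sum_mul _ _ p,
    map_add, map_sum, map_smul, smul_eq_mul]

lemma halfGauss_X_mul_C_add_sum_evenEig_mul_sum_oddEig (hpos : ∀ k, 0 < lam k)
    (hinj : Function.Injective lam) (hlam : ∀ k, hatCoeff (lam k) (2 * K) = 0) (a : ℝ)
    (v : κ → ℝ) :
    halfGauss (X * (C a + ∑ k, v k • evenEig K (lam k)) * ∑ k, v k • oddEig K (lam k)) =
      ∑ k, v k ^ 2 * (lam k * halfGauss (oddEig K (lam k) * oddEig K (lam k))) := by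
  have hX : halfGauss (X * ∑ k, v k • oddEig K (lam k)) = 0 := by
    simp only [mul_comm X, Finset.sum_mul, smul_mul_assoc, map_sum, map_smul,
      halfGauss_oddEig_mul_X, smul_zero, Finset.sum_const_zero]
  rw [halfGauss_X_mul_C_add_sum_evenEig_mul hlam, hX, mul_zero, zero_add]
  refine Finset.sum_congr rfl fun k _ => ?_
  rw [halfGauss_oddEig_mul_sum hpos hinj (fun k l => by rw [hlam, mul_zero]) v (Finset.mem_univ k)]
  ring

lemma eq_zero_of_halfGauss_X_mul_mul_self_nonpos {g : ℝ[X]} (h : halfGauss (X * g * g) ≤ 0) :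
    g = 0 := by
  by_contra hne
  refine h.not_gt (halfGauss_pos (mul_ne_zero (mul_ne_zero X_ne_zero hne) hne) fun t ht => ?_)
  rw [mul_assoc, eval_mul, eval_mul, eval_X]
  exact mul_nonneg ht.le (mul_self_nonneg _)

/-- Testing the vanishing of the odd moments against `X * g`, where `g = a + ∑ vₖ eₖ`, produces
`0 = L(X g²) + c ∑ vₖ² λₖ L(oₖ²)`, a sum of nonnegative terms. -/
lemma eq_zero_of_hatCoeff_even_eq_zero (hc : 0 ≤ c) (hpos : ∀ k, 0 < lam k)
    (hinj : Function.Injective lam) (hlam : ∀ k, hatCoeff (lam k) (2 * K) = 0)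
    (hF : ∀ j ≤ K, halfGauss (He (2 * j + 1) *
      (C a + ∑ k, v k • (evenEig K (lam k) + c • oddEig K (lam k)))) = 0) : v = 0 := by
  have hweight (k : κ) : 0 < lam k * halfGauss (oddEig K (lam k) * oddEig K (lam k)) :=
    mul_pos (hpos k) <|
      halfGauss_oddEig_mul_self_pos_of_bdry (hpos k) (by rw [hlam, mul_zero])
  have hterm (k : κ) :
      0 ≤ v k ^ 2 * (lam k * halfGauss (oddEig K (lam k) * oddEig K (lam k))) :=
    mul_nonneg (sq_nonneg _) (hweight k).le
  rw [C_add_sum_smul_evenEig_add] at hF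
  have hXgF := halfGauss_X_mul_C_add_sum_evenEig_mul hlam a v
    (C a + ∑ k, v k • evenEig K (lam k) + c • ∑ k, v k • oddEig K (lam k))
  simp only [halfGauss_X_mul_eq_zero hF, halfGauss_oddEig_mul_eq_zero hF, mul_zero,
    Finset.sum_const_zero, add_zero] at hXgF
  have hXgo := halfGauss_X_mul_C_add_sum_evenEig_mul_sum_oddEig hpos hinj hlam a v
  generalize C a + ∑ k, v k • evenEig K (lam k) = g at hXgF hXgo
  rw [mul_add, map_add, mul_smul_comm, map_smul, hXgo, smul_eq_mul] at hXgF
  have hg : g = 0 := eq_zero_of_halfGauss_X_mul_mul_self_nonpos <| by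
    linarith [mul_nonneg hc (Finset.sum_nonneg fun k (_ : k ∈ Finset.univ) => hterm k)]
  rw [hg, mul_zero, zero_mul, map_zero, eq_comm,
    Finset.sum_eq_zero_iff_of_nonneg fun k _ => hterm k] at hXgo
  funext l
  exact pow_eq_zero_iff two_ne_zero |>.mp <|
    (mul_eq_zero.mp (hXgo l (Finset.mem_univ l))).resolve_right (hweight l).ne'

lemma eq_zero_of_halfGauss_He_odd_mul_eq_zero {S : Matrix (Fin K) (Fin K) ℝ}
    (hS : IsStieltjes S) (hc : 0 ≤ c) {x : Fin K → ℝ}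
    (hF : ∀ j ≤ K, halfGauss (He (2 * j + 1) *
      (C a + X * oddComb K x + c • oddComb K (S *ᵥ x))) = 0) : x = 0 := by
  refine (isStieltjes_weightedGram_X.add_smul hS hc).eq_zero_of_mulVec_eq_smul (a := a)
    (p := fun i => -halfGauss (signedHe i)) (r := fun i => halfGauss (X ^ 2 * signedHe i))
    (fun i => neg_nonneg.mpr (halfGauss_signedHe_neg i).le)
    (fun i => halfGauss_X_sq_mul_signedHe_nonneg i) (funext fun i => ?_) ?_
  · have h := halfGauss_signedHe_mul_eq_zero hF i
    rw [mul_add, mul_add, map_add, map_add, mul_smul_comm, map_smul, mul_comm _ (C a),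
      halfGauss_C_mul, ← weightedGram_mulVec_apply, halfGauss_signedHe_mul_oddComb,
      smul_eq_mul] at h
    rw [add_mulVec, smul_mulVec, Pi.add_apply, Pi.smul_apply, Pi.smul_apply, smul_eq_mul,
      smul_eq_mul]
    linarith
  · have h := halfGauss_X_mul_eq_zero hF
    rwa [mul_add, mul_add, map_add, map_add, mul_smul_comm, map_smul, halfGauss_X_mul_oddComb,
      smul_zero, add_zero, mul_comm X, halfGauss_C_mul, halfGauss_X, mul_one, ← mul_assoc,
      ← pow_two, halfGauss_mul_oddComb] at h

open scoped MatrixOrder in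
/-- Here `X oₖ = λₖ eₖ`, so in the coordinates of `∑ (vₖ / λₖ) oₖ` the term `∑ vₖ oₖ` is the square
root of the Gram matrix of weight `X²`. -/
lemma eq_zero_of_hatCoeff_odd_eq_zero (hc : 0 ≤ c) (hpos : ∀ k, 0 < lam k)
    (hinj : Function.Injective lam) (hlam : ∀ k, hatCoeff (lam k) (2 * K + 1) = 0)
    (hF : ∀ j ≤ K, halfGauss (He (2 * j + 1) *
      (C a + ∑ k, v k • (evenEig K (lam k) + c • oddEig K (lam k)))) = 0) : v = 0 := by
  choose E hE using fun k => exists_oddComb_eq_oddEig K (lam k)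
  have hXo (k : κ) : X * oddEig K (lam k) = lam k • evenEig K (lam k) := by
    rw [X_mul_oddEig, hlam, mul_zero, zero_smul, sub_zero]
  set G := weightedGram K (X ^ 2)
  have hG : IsStieltjes G := isStieltjes_weightedGram_X_sq
  have hsqrt (k : κ) : CFC.sqrt G *ᵥ E k = lam k • E k :=
    sqrt_mulVec_eq_smul hG.posDef (hpos k).le (weightedGram_X_sq_mulVec (hlam k) (hE k))
  set x : Fin K → ℝ := ∑ k, (v k / lam k) • E k
  have hx : oddComb K x = ∑ k, (v k / lam k) • oddEig K (lam k) := by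
    simp only [x, map_sum, map_smul, hE]
  have hXx : X * oddComb K x = ∑ k, v k • evenEig K (lam k) := by
    simp only [hx, Finset.mul_sum, mul_smul_comm, hXo, smul_smul, div_mul_cancel₀ _ (hpos _).ne']
  have hSx : oddComb K (CFC.sqrt G *ᵥ x) = ∑ k, v k • oddEig K (lam k) := by
    simp only [x, mulVec_sum, mulVec_smul, hsqrt, smul_smul, div_mul_cancel₀ _ (hpos _).ne',
      map_sum, map_smul, hE]
  have hx0 : x = 0 := by
    refine eq_zero_of_halfGauss_He_odd_mul_eq_zero hG.sqrt hc (a := a) ?_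
    simpa only [hXx, hSx, C_add_sum_smul_evenEig_add] using hF
  rw [hx0, map_zero] at hx
  have hindep := linearIndependent_oddEig hpos hinj fun k l => by rw [hlam, zero_mul]
  funext l
  have := Fintype.linearIndependent_iff.mp hindep _ hx.symm l
  exact (div_eq_zero_iff.mp this).resolve_right (hpos l).ne'

end Kernel

section Roots

lemma Hhat_eval_neg (x : ℝ) : ∀ n, (Hhat n).eval (-x) = (-1) ^ n * (Hhat n).eval x
  | 0 => by simp [Hhat]
  | 1 => by simp [Hhat]
  | n + 2 => by
    simp only [Hhat, eval_sub, eval_mul, eval_X, eval_C, Hhat_eval_neg x n, Hhat_eval_neg x (n + 1)]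
    ring

lemma degree_Hhat : ∀ n, (Hhat n).degree = n
  | 0 => degree_one
  | 1 => degree_X
  | n + 2 => by
    have hlead : (X * Hhat (n + 1)).degree = ((n + 2 : ℕ) : WithBot ℕ) := by
      rw [degree_mul, degree_X, degree_Hhat, ← Nat.cast_one, ← Nat.cast_add, add_comm]
    have hlt : (C ((n : ℝ) + 3) * Hhat n).degree < (X * Hhat (n + 1)).degree := by
      rw [degree_C_mul (by positivity), degree_Hhat, hlead]
      exact_mod_cast Nat.lt_add_of_pos_right two_pos
    simpa only [Hhat] using (degree_sub_eq_left_of_degree_lt hlt).trans hlead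

variable {n : ℕ} {lam : Fin n → ℝ}

lemma range_eq_of_eval_Hhat_eq_zero (hinj : Function.Injective lam)
    (hroot : ∀ j, (Hhat n).eval (lam j) = 0) : Set.range lam = {x | (Hhat n).eval x = 0} := by
  refine Set.Subset.antisymm (Set.range_subset_iff.mpr hroot) fun x hx => ?_
  by_contra hmem
  have hzero : Hhat n = 0 := eq_zero_of_natDegree_lt_card_of_eval_eq_zero _
    (Fin.cons_injective_iff.mpr ⟨hmem, hinj⟩) (Fin.cases hx hroot)
    (by rw [natDegree_eq_of_degree_eq_some (degree_Hhat n), Fintype.card_fin]; exact n.lt_succ_self)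
  have := degree_Hhat n
  rw [hzero, degree_zero] at this
  exact WithBot.bot_ne_natCast n this

lemma apply_rev_eq_neg_of_eval_Hhat_eq_zero (hanti : StrictAnti lam)
    (hroot : ∀ j, (Hhat n).eval (lam j) = 0) (k : Fin n) : lam k.rev = -lam k := by
  have hrev : StrictMono fun j => lam (Fin.rev j) := hanti.comp Fin.rev_strictAnti
  have hneg : StrictMono fun j => -lam j := hanti.neg
  have hrange : Set.range (fun j => lam (Fin.rev j)) = Set.range fun j => -lam j := by
    rw [range_eq_of_eval_Hhat_eq_zero hrev.injective fun j => hroot _,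
      range_eq_of_eval_Hhat_eq_zero hneg.injective fun j => by
        rw [Hhat_eval_neg, hroot, mul_zero]]
  exact congrFun ((hrev.range_inj hneg).mp hrange) k

lemma pos_of_eval_Hhat_eq_zero (hanti : StrictAnti lam) (hroot : ∀ j, (Hhat n).eval (lam j) = 0)
    {k : Fin n} (hk : 2 * (k : ℕ) + 1 < n) : 0 < lam k := by
  have hsymm := apply_rev_eq_neg_of_eval_Hhat_eq_zero hanti hroot k
  have hlt : lam k.rev < lam k := hanti (by rw [Fin.lt_def, Fin.val_rev]; omega)
  linarith

end Roots

section BoundaryMatrix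

/-- The polynomial `∑_{l < n} χ̂(l + 2) Ĥe_l(x) / (l + 2)! He_{l+2}`, whose half-range moments are,
up to `√(2π)`, the entries of the columns of `S * R̂`. -/
noncomputable def boundaryPoly (χ : ℝ) (n : ℕ) (x : ℝ) : ℝ[X] :=
  ∑ l ∈ Finset.range n, (chiHat χ (l + 2) * hatCoeff x l) • He (l + 2)

/-- The matrix of the odd half-range moments `L(X ^ (2i + 1) * Q j)`. -/
noncomputable def oddMomentMatrix {N : ℕ} (Q : Fin N → ℝ[X]) : Matrix (Fin N) (Fin N) ℝ :=
  Matrix.of fun i j => halfGauss (X ^ (2 * (i : ℕ) + 1) * Q j)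

lemma boundaryPoly_odd (χ : ℝ) (K : ℕ) (x : ℝ) :
    boundaryPoly χ (2 * K + 1) x = evenEig K x + ((2 - χ) / χ) • oddEig K x := by
  induction K with
  | zero => simp [boundaryPoly, evenEig, oddEig, chiHat]
  | succ K ih =>
    have hodd : ¬ Even (2 * K + 1 + 2) := by grind
    have heven : Even (2 * K + 2 + 2) := by grind
    rw [boundaryPoly, mul_add_one, Finset.sum_range_succ, Finset.sum_range_succ, ← boundaryPoly, ih,
      chiHat, if_neg hodd, chiHat, if_pos heven, one_mul, evenEig_succ, oddEig_succ, smul_add,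
      smul_smul]
    abel

lemma boundaryPoly_even {χ : ℝ} {K : ℕ} {x : ℝ} (hx : hatCoeff x (2 * K) = 0) :
    boundaryPoly χ (2 * K) x = evenEig K x + ((2 - χ) / χ) • oddEig K x := by
  rw [← boundaryPoly_odd, boundaryPoly, boundaryPoly, Finset.sum_range_succ, hx, mul_zero,
    zero_smul, add_zero]

lemma eq_zero_of_boundaryPoly {K n : ℕ} (hn : n = 2 * K ∨ n = 2 * K + 1) {χ : ℝ}
    (hχ : 0 ≤ (2 - χ) / χ) {κ : Type*} [Fintype κ] {lam v : κ → ℝ} {a : ℝ} (hpos : ∀ k, 0 < lam k)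
    (hinj : Function.Injective lam) (hroot : ∀ k, hatCoeff (lam k) n = 0)
    (hF : ∀ j ≤ K, halfGauss (He (2 * j + 1) *
      (C a + ∑ k, v k • boundaryPoly χ n (lam k))) = 0) : a = 0 ∧ v = 0 := by
  have hv : v = 0 := by
    rcases hn with rfl | rfl
    · simp only [boundaryPoly_even (hroot _)] at hF
      exact eq_zero_of_hatCoeff_even_eq_zero hχ hpos hinj hroot hF
    · simp only [boundaryPoly_odd] at hF
      exact eq_zero_of_hatCoeff_odd_eq_zero hχ hpos hinj hroot hF
  refine ⟨?_, hv⟩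
  have hXF := halfGauss_X_mul_eq_zero hF
  simpa only [hv, Pi.zero_apply, zero_smul, Finset.sum_const_zero, add_zero, X_mul_C,
    halfGauss_C_mul, halfGauss_X, mul_one] using hXF

lemma oddMomentMatrix_mulVec_apply {N : ℕ} (Q : Fin N → ℝ[X]) (u : Fin N → ℝ) (i : Fin N) :
    (oddMomentMatrix Q *ᵥ u) i = halfGauss (X ^ (2 * (i : ℕ) + 1) * ∑ j, u j • Q j) := by
  simp only [mulVec, dotProduct, oddMomentMatrix, of_apply, Finset.mul_sum, mul_smul_comm, map_sum,
    map_smul, smul_eq_mul, mul_comm (u _)]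

lemma det_oddMomentMatrix_ne_zero {K : ℕ} {Q : Fin (K + 1) → ℝ[X]}
    (hQ : ∀ u : Fin (K + 1) → ℝ,
      (∀ j ≤ K, halfGauss (He (2 * j + 1) * ∑ k, u k • Q k) = 0) → u = 0) :
    (oddMomentMatrix Q).det ≠ 0 := by
  intro hdet
  obtain ⟨u, hu, hQu⟩ := exists_mulVec_eq_zero_iff.mpr hdet
  refine hu (hQ u fun j hj => halfGauss_He_odd_mul_eq_zero (fun i hi => ?_) hj)
  rw [← oddMomentMatrix_mulVec_apply Q u ⟨i, Nat.lt_succ_of_le hi⟩, hQu, Pi.zero_apply]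

/-- The matrix `(h, (S - 2 * h * e₁ᵀ) * R̂₊)` of the boundary conditions, in which `R̂₊` is built
from arbitrary nodes `x k` and has `n` rows. -/
noncomputable def boundaryMatrix (χ : ℝ) (n : ℕ) {K : ℕ} (x : Fin K → ℝ) :
    Matrix (Fin (K + 1)) (Fin (K + 1)) ℝ :=
  Matrix.of fun i => Fin.cons ((2 * (i : ℕ)).doubleFactorial / √(2 * π)) fun k =>
    ∑ l : Fin n, (Sχ χ (2 * (i : ℕ) + 1) ((l : ℕ) + 2) -
      2 * ((2 * (i : ℕ)).doubleFactorial / √(2 * π)) * (if (l : ℕ) = 0 then 1 else 0)) *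
        hatCoeff (x k) l

lemma halfGauss_X_pow_mul_boundaryPoly (χ : ℝ) (m n : ℕ) (x : ℝ) :
    halfGauss (X ^ m * boundaryPoly χ n x) / √(2 * π) =
      ∑ l ∈ Finset.range n, Sχ χ m (l + 2) * hatCoeff x l := by
  simp only [boundaryPoly, Finset.mul_sum, mul_smul_comm, map_sum, map_smul, Finset.sum_div,
    smul_eq_mul, Sχ, Sstar_eq_halfGauss]
  exact Finset.sum_congr rfl fun l _ => by ring

/-- The correction `-2 * h * e₁ᵀ` subtracts the constant `1` from each `boundaryPoly` because
`Ĥe₀(x) / 2! = 1 / 2`. -/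
lemma boundaryMatrix_eq_smul_oddMomentMatrix (χ : ℝ) {n K : ℕ} (hn : K ≤ n) (x : Fin K → ℝ) :
    boundaryMatrix χ n x =
      (√(2 * π))⁻¹ • oddMomentMatrix (Fin.cons 1 fun k => boundaryPoly χ n (x k) - 1) := by
  ext i j
  refine Fin.cases ?_ (fun k => ?_) j
  · simp only [boundaryMatrix, oddMomentMatrix, Matrix.smul_apply, of_apply, Fin.cons_zero, mul_one,
      halfGauss_X_pow_odd, smul_eq_mul, div_eq_inv_mul]
  · have hmem : 0 ∈ Finset.range n := Finset.mem_range.mpr (k.pos.trans_le hn)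
    simp only [boundaryMatrix, oddMomentMatrix, Matrix.smul_apply, of_apply, Fin.cons_succ,
      smul_eq_mul, mul_sub, mul_one, map_sub, halfGauss_X_pow_odd, ← div_eq_inv_mul,
      halfGauss_X_pow_mul_boundaryPoly]
    rw [Fin.sum_univ_eq_sum_range fun l => (Sχ χ (2 * (i : ℕ) + 1) (l + 2) -
      2 * ((2 * (i : ℕ)).doubleFactorial / √(2 * π)) * (if l = 0 then 1 else 0)) *
        hatCoeff (x k) l]
    simp only [sub_mul, Finset.sum_sub_distrib, mul_ite, ite_mul, mul_one, mul_zero, zero_mul,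
      Finset.sum_ite_eq', if_pos hmem, hatCoeff_zero]
    ring

theorem det_boundaryMatrix_ne_zero {K n : ℕ} (hn : n = 2 * K ∨ n = 2 * K + 1) {χ : ℝ}
    (hχ : 0 ≤ (2 - χ) / χ) {x : Fin K → ℝ} (hpos : ∀ k, 0 < x k) (hinj : Function.Injective x)
    (hroot : ∀ k, (Hhat n).eval (x k) = 0) : (boundaryMatrix χ n x).det ≠ 0 := by
  rw [boundaryMatrix_eq_smul_oddMomentMatrix χ (by omega), det_smul]
  refine mul_ne_zero (by positivity) (det_oddMomentMatrix_ne_zero fun u hu => ?_)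
  have hsum : ∑ j, u j • (Fin.cons 1 fun k => boundaryPoly χ n (x k) - 1 : Fin (K + 1) → ℝ[X]) j =
      C (u 0 - ∑ k : Fin K, u k.succ) + ∑ k : Fin K, u k.succ • boundaryPoly χ n (x k) := by
    simp only [Fin.sum_univ_succ, Fin.cons_zero, Fin.cons_succ, mul_sub, Finset.sum_sub_distrib,
      smul_eq_C_mul, mul_one, C_sub, map_sum]
    abel
  rw [hsum] at hu
  obtain ⟨h0, hsucc⟩ := eq_zero_of_boundaryPoly hn hχ hpos hinj
    (fun k => by rw [hatCoeff, hroot, zero_div]) hu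
  have hsucc' (k : Fin K) : u k.succ = 0 := congrFun hsucc k
  simp only [hsucc', Finset.sum_const_zero, sub_zero] at h0
  exact funext (Fin.cases h0 hsucc')

theorem boundary_matrix_nonsingular_general {n : ℕ} {χ : ℝ} (hχ0 : 0 < χ) (hχ2 : χ ≤ 2)
    {lam : Fin n → ℝ} (hroot : ∀ j, (Hhat n).eval (lam j) = 0) (hanti : StrictAnti lam) :
    (boundaryMatrix χ n fun k : Fin (n / 2) => lam (k.castLE (n.div_le_self 2))).det ≠ 0 :=
  det_boundaryMatrix_ne_zero (by omega) (div_nonneg (sub_nonneg.mpr hχ2) hχ0.le)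
    (fun k => pos_of_eval_Hhat_eq_zero hanti hroot (by rw [Fin.val_castLE]; omega))
    (hanti.injective.comp (Fin.castLE_injective _)) fun _ => hroot _

end BoundaryMatrix

/-- Unique solvability of the boundary-condition system: for M ≥ 3 and an
    algebraic accommodation coefficient χ ∈ (0,1], the matrix
    A = ( h , (S − 2 h e₁ᵀ)·R̂₊ ) has nonzero determinant.  Here (1-based)
    hᵢ = (2i−2)!!/√(2π), Sᵢⱼ = S(2i−1, j+1), R̂ᵢⱼ = Ĥe_{i−1}(λ̂ⱼ)/(i+1)! with
    λ̂₁ > ⋯ > λ̂_{M−2} the roots of Ĥe_{M−2}, and R̂₊ its first ⌊M/2⌋−1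
    columns. -/
theorem boundary_matrix_nonsingular (M : ℕ) (hM : 3 ≤ M)
    (χ : ℝ) (hχ0 : 0 < χ) (hχ1 : χ ≤ 1) (hχalg : IsAlgebraic ℚ χ)
    (lam : Fin (M - 2) → ℝ)
    (hroot : ∀ j, (Hhat (M - 2)).eval (lam j) = 0)
    (hdesc : ∀ i j : Fin (M - 2), i < j → lam j < lam i) :
    (Matrix.of fun i j : Fin (M / 2) =>
        if hj : (j : ℕ) = 0 then
          (Nat.doubleFactorial (2 * (i : ℕ)) : ℝ) / Real.sqrt (2 * Real.pi)
        else
          ((Matrix.of fun (i' : Fin (M / 2)) (j' : Fin (M - 2)) =>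
              Sχ χ (2 * (i' : ℕ) + 1) ((j' : ℕ) + 2) -
                2 * ((Nat.doubleFactorial (2 * (i' : ℕ)) : ℝ) /
                      Real.sqrt (2 * Real.pi)) *
                  (if (j' : ℕ) = 0 then 1 else 0)) *
            (Matrix.of fun (i' : Fin (M - 2)) (j' : Fin (M / 2 - 1)) =>
              (Hhat (i' : ℕ)).eval (lam (Fin.castLE (by omega) j')) /
                (Nat.factorial ((i' : ℕ) + 2) : ℝ)))
            i ⟨(j : ℕ) - 1, by have := j.isLt; omega⟩).det ≠ 0 := by
  have hsize : (M - 2) / 2 + 1 = M / 2 := by omega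
  rw [← det_submatrix_equiv_self (finCongr hsize)]
  convert boundary_matrix_nonsingular_general hχ0 (hχ1.trans one_le_two) hroot hdesc using 2
  ext i j
  refine Fin.cases ?_ (fun k => ?_) j <;> rfl
end
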